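/- Let n ≥ 2, N = 2^{n-1} − 1, let λ_z ∈ [0,1] for z ∈ {0,1}^N, and let Q(·|z) = λ_z δ_{bin_n(2l(z))} + (1−λ_z) δ_{bin_n(2l(z)+1)}. Let p be the product distribution on {0,1}^N with parameters p_j ∈ (0,1) and write q = p^⊤Q ∈ Δ_n with entries (q_0, q_1, …, q_{2N+1}). Then for every i ∈ {1,…,N}: q_{2i} + q_{2i+1} = (1−p_i)∏_{j>i} p_j, q_0 + q_1 = ∏_{j=1}^N p_j, and q_{2i}/q_{2i+1} = (∑_{z: l(z)=i} λ_z ∏_{k<i} p_k^{1−z_k}(1−p_k)^{z_k}) / (∑_{z: l(z)=i} (1−λ_z) ∏_{k<i} p_k^{1−z_k}(1−p_k)^{z_k}) whenever the denominator is nonzero. -/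

import Mathlib

open Finset

/-- The logistic sigmoid function `σ(a) = 1/(1+exp(-a))`. -/
noncomputable def sigmoid (a : ℝ) : ℝ := 1 / (1 + Real.exp (-a))

/-- Real value of a bit. -/
def bval (b : Bool) : ℝ := if b then 1 else 0

/-- The set `F_{k,m}` of Markov kernels representable by a feedforward layer of `m`
sigmoid stochastic units with `k` binary inputs. -/
noncomputable def Fset (k m : ℕ) : Set ((Fin k → Bool) → (Fin m → Bool) → ℝ) :=
  {P | ∃ (V : Fin m → Fin k → ℝ) (c : Fin m → ℝ), ∀ y z,
    P y z = ∏ j, (if z j then sigmoid ((∑ i, V j i * bval (y i)) + c j)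
                  else 1 - sigmoid ((∑ i, V j i * bval (y i)) + c j))}

/-- `Δ_{k,n}`: all Markov kernels from `{0,1}^k` to distributions on `{0,1}^n`. -/
def markovKernels (k n : ℕ) : Set ((Fin k → Bool) → (Fin n → Bool) → ℝ) :=
  {P | (∀ y x, 0 ≤ P y x) ∧ ∀ y, ∑ x, P y x = 1}

/-- Composition of Markov kernels: `(R ∘ Q)(x|y) = ∑_z Q(z|y) R(x|z)`. -/
noncomputable def kcomp {k m n : ℕ} (R : (Fin m → Bool) → (Fin n → Bool) → ℝ)
    (Q : (Fin k → Bool) → (Fin m → Bool) → ℝ) : (Fin k → Bool) → (Fin n → Bool) → ℝ :=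
  fun y x => ∑ z, Q y z * R z x

/-- `Δ_n`: probability distributions on `{0,1}^n`. -/
def simplex (n : ℕ) : Set ((Fin n → Bool) → ℝ) :=
  {p | (∀ x, 0 ≤ p x) ∧ ∑ x, p x = 1}

/-- `Δ_n^+`: strictly positive probability distributions on `{0,1}^n`. -/
def simplexPos (n : ℕ) : Set ((Fin n → Bool) → ℝ) :=
  {p | (∀ x, 0 < p x) ∧ ∑ x, p x = 1}

/-- Mixture `p^⊤ R` of the rows of a kernel `R` with weights `p`. -/
noncomputable def mix {m n : ℕ} (p : (Fin m → Bool) → ℝ)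
    (R : (Fin m → Bool) → (Fin n → Bool) → ℝ) : (Fin n → Bool) → ℝ :=
  fun x => ∑ z, p z * R z x

/-- `E_m`: strictly positive product distributions on `{0,1}^m`, where the `j`-th bit
is `0` with probability `q j ∈ (0,1)`. -/
def Eset (m : ℕ) : Set ((Fin m → Bool) → ℝ) :=
  {p | ∃ q : Fin m → ℝ, (∀ j, q j ∈ Set.Ioo (0:ℝ) 1) ∧
    ∀ z, p z = ∏ j, (if z j then 1 - q j else q j)}

/-- Integer value of a binary vector (bit `i` has weight `2^i`). -/
def intval {k : ℕ} (y : Fin k → Bool) : ℕ := ∑ i, if y i then 2 ^ (i : ℕ) else 0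

/-- `l(z)`: position (1-based) of the largest nonzero entry of `z`, and `0` if `z = 0`. -/
def lidx {N : ℕ} (z : Fin N → Bool) : ℕ :=
  (Finset.univ.filter (fun j => z j = true)).sup (fun j => (j : ℕ) + 1)

/-- `bin_n(l)`: the `n`-bit binary representation of `l`. -/
def binVec (n l : ℕ) : Fin n → Bool := fun i => Nat.testBit l (i : ℕ)

/-- Point measure at `x ∈ {0,1}^n`. -/
noncomputable def deltaAt {n : ℕ} (x : Fin n → Bool) : (Fin n → Bool) → ℝ :=
  fun x' => if x' = x then 1 else 0

/-- The kernel `Q(·|z) = λ_z δ_{bin_n(2l(z))} + (1-λ_z) δ_{bin_n(2l(z)+1)}`. -/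
noncomputable def Qkern (n : ℕ) (lam : (Fin (2 ^ (n - 1) - 1) → Bool) → ℝ) :
    (Fin (2 ^ (n - 1) - 1) → Bool) → (Fin n → Bool) → ℝ :=
  fun z x => lam z * deltaAt (binVec n (2 * lidx z)) x
    + (1 - lam z) * deltaAt (binVec n (2 * lidx z + 1)) x

/-- The entry `q_t` (for `t ∈ {0,…,2^n - 1}`, indexed via `bin_n(t)`) of the mixture
`q = p^⊤Q`, where `p` is the product distribution with parameters `pp`. -/
noncomputable def qEntry (n : ℕ) (lam : (Fin (2 ^ (n - 1) - 1) → Bool) → ℝ)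
    (pp : Fin (2 ^ (n - 1) - 1) → ℝ) (t : ℕ) : ℝ :=
  ∑ z, (∏ j, if z j then 1 - pp j else pp j) * Qkern n lam z (binVec n t)

theorem binVec_eq_iff {n a b : ℕ} (ha : a < 2 ^ n) (hb : b < 2 ^ n) :
    binVec n a = binVec n b ↔ a = b := by
  constructor
  · intro h
    apply Nat.eq_of_testBit_eq
    intro k
    by_cases hk : k < n
    · exact congrFun h ⟨k, hk⟩
    · have hp : 2 ^ n ≤ 2 ^ k := Nat.pow_le_pow_right (by norm_num) (by omega)
      rw [Nat.testBit_eq_false_of_lt (lt_of_lt_of_le ha hp),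
        Nat.testBit_eq_false_of_lt (lt_of_lt_of_le hb hp)]
  · rintro rfl; rfl

theorem lidx_le {N : ℕ} (z : Fin N → Bool) : lidx z ≤ N := by
  unfold lidx
  apply Finset.sup_le
  intro j _
  exact j.2

theorem lidx_eq_zero_iff {N : ℕ} (z : Fin N → Bool) : lidx z = 0 ↔ ∀ j, z j = false := by
  unfold lidx
  rw [← bot_eq_zero, Finset.sup_eq_bot_iff]
  simp

theorem lidx_eq_succ_iff {N : ℕ} (z : Fin N → Bool) (i : Fin N) :
    lidx z = (i : ℕ) + 1 ↔ z i = true ∧ ∀ j, i < j → z j = false := by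
  have key : ∀ j, z j = true → (j : ℕ) + 1 ≤ lidx z := by
    intro j hj
    exact Finset.le_sup (f := fun j : Fin N => (j : ℕ) + 1)
      (s := Finset.univ.filter (fun j => z j = true)) (by simpa using hj)
  constructor
  · intro h
    have h2 : ∀ j, i < j → z j = false := by
      intro j hj
      by_contra hc
      have := key j (by simpa using hc)
      have h3 : (i : ℕ) < j := hj
      omega
    refine ⟨?_, h2⟩
    by_contra hc
    have hle : lidx z ≤ (i : ℕ) := by
      unfold lidx
      apply Finset.sup_le
      intro j hj
      have hj' : z j = true := by simpa using hj
      rcases lt_trichotomy j i with hlt | heq | hgt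
      · exact hlt
      · exact absurd (heq ▸ hj') hc
      · rw [h2 j hgt] at hj'; simp at hj'
    omega
  · rintro ⟨h1, h2⟩
    apply le_antisymm _ (key i h1)
    unfold lidx
    apply Finset.sup_le
    intro j hj
    have hj' : z j = true := by simpa using hj
    by_contra hc
    rw [h2 j (by show (i : ℕ) < j; omega)] at hj'
    simp at hj'

theorem qEntry_even (n : ℕ) (hn : 2 ≤ n) (lam : (Fin (2 ^ (n - 1) - 1) → Bool) → ℝ)
    (pp : Fin (2 ^ (n - 1) - 1) → ℝ) (m : ℕ) (hm : m ≤ 2 ^ (n - 1) - 1) :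
    qEntry n lam pp (2 * m) = ∑ z ∈ Finset.univ.filter (fun z => lidx z = m),
      lam z * ∏ j, if z j then 1 - pp j else pp j := by
  unfold qEntry
  rw [Finset.sum_filter]
  apply Finset.sum_congr rfl
  intro z _
  have hz := lidx_le z
  have hpow : 2 ^ n = 2 * 2 ^ (n - 1) := by
    rw [← pow_succ']; congr 1; omega
  have hpos : 0 < 2 ^ (n - 1) := by positivity
  have e1 : binVec n (2 * m) = binVec n (2 * lidx z) ↔ lidx z = m := by
    rw [binVec_eq_iff (by omega) (by omega)]; omega
  have e2 : ¬ binVec n (2 * m) = binVec n (2 * lidx z + 1) := by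
    rw [binVec_eq_iff (by omega) (by omega)]; omega
  unfold Qkern deltaAt
  rw [if_neg e2]
  by_cases h : lidx z = m
  · rw [if_pos (e1.2 h), if_pos h]; ring
  · rw [if_neg (fun hh => h (e1.1 hh)), if_neg h]; ring

theorem qEntry_odd (n : ℕ) (hn : 2 ≤ n) (lam : (Fin (2 ^ (n - 1) - 1) → Bool) → ℝ)
    (pp : Fin (2 ^ (n - 1) - 1) → ℝ) (m : ℕ) (hm : m ≤ 2 ^ (n - 1) - 1) :
    qEntry n lam pp (2 * m + 1) = ∑ z ∈ Finset.univ.filter (fun z => lidx z = m),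
      (1 - lam z) * ∏ j, if z j then 1 - pp j else pp j := by
  unfold qEntry
  rw [Finset.sum_filter]
  apply Finset.sum_congr rfl
  intro z _
  have hz := lidx_le z
  have hpow : 2 ^ n = 2 * 2 ^ (n - 1) := by
    rw [← pow_succ']; congr 1; omega
  have hpos : 0 < 2 ^ (n - 1) := by positivity
  have e1 : binVec n (2 * m + 1) = binVec n (2 * lidx z + 1) ↔ lidx z = m := by
    rw [binVec_eq_iff (by omega) (by omega)]; omega
  have e2 : ¬ binVec n (2 * m + 1) = binVec n (2 * lidx z) := by
    rw [binVec_eq_iff (by omega) (by omega)]; omega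
  unfold Qkern deltaAt
  rw [if_neg e2]
  by_cases h : lidx z = m
  · rw [if_pos (e1.2 h), if_pos h]; ring
  · rw [if_neg (fun hh => h (e1.1 hh)), if_neg h]; ring

theorem prod_split {N : ℕ} (i : Fin N) (f : Fin N → ℝ) :
    ∏ j, f j = (∏ j ∈ Finset.univ.filter (fun j => j < i), f j) *
      (f i * ∏ j ∈ Finset.univ.filter (fun j => i < j), f j) := by
  rw [← Finset.prod_filter_mul_prod_filter_not Finset.univ (fun j => j < i) f]
  congr 1
  have : Finset.univ.filter (fun j => ¬ j < i)
      = insert i (Finset.univ.filter (fun j => i < j)) := by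
    ext j
    simp only [Finset.mem_filter, Finset.mem_univ, true_and, Finset.mem_insert]
    rw [not_lt, le_iff_eq_or_lt, eq_comm]
  rw [this, Finset.prod_insert (by simp)]

theorem prod_of_lidx {N : ℕ} (pp : Fin N → ℝ) (i : Fin N) (z : Fin N → Bool)
    (hz : lidx z = (i : ℕ) + 1) :
    (∏ j, if z j then 1 - pp j else pp j)
      = (∏ kk ∈ Finset.univ.filter (fun kk => kk < i), if z kk then 1 - pp kk else pp kk) *
        ((1 - pp i) * ∏ j ∈ Finset.univ.filter (fun j => i < j), pp j) := by
  obtain ⟨h1, h2⟩ := (lidx_eq_succ_iff z i).1 hz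
  rw [prod_split i, h1]
  congr 2
  apply Finset.prod_congr rfl
  intro j hj
  rw [h2 j (by simpa using hj)]
  simp

theorem sum_prod_lidx {N : ℕ} (pp : Fin N → ℝ) (i : Fin N) :
    (∑ z ∈ Finset.univ.filter (fun z : Fin N → Bool => lidx z = (i : ℕ) + 1),
      ∏ j, if z j then 1 - pp j else pp j)
      = (1 - pp i) * ∏ j ∈ Finset.univ.filter (fun j => i < j), pp j := by
  let g : Fin N → Bool → ℝ := fun j b =>
    if j < i then (if b then 1 - pp j else pp j)
    else if j = i then (if b then 1 - pp j else 0)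
    else (if b then 0 else pp j)
  have hsum : (∑ z ∈ Finset.univ.filter (fun z : Fin N → Bool => lidx z = (i : ℕ) + 1),
      ∏ j, if z j then 1 - pp j else pp j) = ∑ z : Fin N → Bool, ∏ j, g j (z j) := by
    rw [Finset.sum_filter]
    apply Finset.sum_congr rfl
    intro z _
    split_ifs with h
    · obtain ⟨h1, h2⟩ := (lidx_eq_succ_iff z i).1 h
      apply Finset.prod_congr rfl
      intro j _
      rcases lt_trichotomy j i with hlt | heq | hgt
      · simp [g, hlt]
      · subst heq; simp [g, h1]
      · simp [g, hgt.not_gt, hgt.ne', h2 j hgt]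
    · rw [lidx_eq_succ_iff] at h
      symm
      by_cases hi : z i = true
      · have : ∃ j, i < j ∧ z j = true := by
          by_contra hc
          push Not at hc
          exact h ⟨hi, fun j hj => by simpa using hc j hj⟩
        obtain ⟨j, hj, hzj⟩ := this
        apply Finset.prod_eq_zero (Finset.mem_univ j)
        simp [g, hj.not_gt, hj.ne', hzj]
      · apply Finset.prod_eq_zero (Finset.mem_univ i)
        simp [g, hi]
  rw [hsum, ← Fintype.prod_sum, prod_split i]
  rw [Finset.prod_eq_one, one_mul]
  · congr 1
    · simp [g]
    · apply Finset.prod_congr rfl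
      intro j hj
      have hj' : i < j := by simpa using hj
      simp [g, hj'.not_gt, hj'.ne']
  · intro j hj
    have hj' : j < i := by simpa using hj
    simp [g, hj']

/-- Computation of the mixture `q = p^⊤Q` for the pairwise-mixture kernel: the pair sums
`q_{2i} + q_{2i+1}`, the pair sum `q_0 + q_1`, and the ratios `q_{2i}/q_{2i+1}`
(1-based `i ∈ {1,…,N}` is represented by `i : Fin N` via `i+1`). -/
theorem pairwise_mixture_entries
    (n : ℕ) (hn : 2 ≤ n)
    (lam : (Fin (2 ^ (n - 1) - 1) → Bool) → ℝ) (hlam : ∀ z, lam z ∈ Set.Icc (0:ℝ) 1)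
    (pp : Fin (2 ^ (n - 1) - 1) → ℝ) (hpp : ∀ j, pp j ∈ Set.Ioo (0:ℝ) 1) :
    (∀ i : Fin (2 ^ (n - 1) - 1),
      qEntry n lam pp (2 * ((i : ℕ) + 1)) + qEntry n lam pp (2 * ((i : ℕ) + 1) + 1)
        = (1 - pp i) * ∏ j ∈ Finset.univ.filter (fun j => i < j), pp j) ∧
    (qEntry n lam pp 0 + qEntry n lam pp 1 = ∏ j, pp j) ∧
    (∀ i : Fin (2 ^ (n - 1) - 1),
      (∑ z ∈ Finset.univ.filter (fun z => lidx z = (i : ℕ) + 1),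
          (1 - lam z) * ∏ kk ∈ Finset.univ.filter (fun kk => kk < i),
            (if z kk then 1 - pp kk else pp kk)) ≠ 0 →
      qEntry n lam pp (2 * ((i : ℕ) + 1)) / qEntry n lam pp (2 * ((i : ℕ) + 1) + 1)
        = (∑ z ∈ Finset.univ.filter (fun z => lidx z = (i : ℕ) + 1),
            lam z * ∏ kk ∈ Finset.univ.filter (fun kk => kk < i),
              (if z kk then 1 - pp kk else pp kk))
          / (∑ z ∈ Finset.univ.filter (fun z => lidx z = (i : ℕ) + 1),
              (1 - lam z) * ∏ kk ∈ Finset.univ.filter (fun kk => kk < i),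
                (if z kk then 1 - pp kk else pp kk))) := by
  have hQ : ∀ m, m ≤ 2 ^ (n - 1) - 1 → qEntry n lam pp (2 * m) + qEntry n lam pp (2 * m + 1)
      = ∑ z ∈ Finset.univ.filter (fun z : Fin (2 ^ (n - 1) - 1) → Bool => lidx z = m),
        ∏ j, if z j then 1 - pp j else pp j := by
    intro m hm
    rw [qEntry_even n hn lam pp m hm, qEntry_odd n hn lam pp m hm, ← Finset.sum_add_distrib]
    apply Finset.sum_congr rfl
    intro z _
    ring
  refine ⟨?_, ?_, ?_⟩
  · intro i
    rw [hQ _ i.2, sum_prod_lidx]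
  · have h0 := hQ 0 (Nat.zero_le _)
    rw [Nat.mul_zero, Nat.zero_add] at h0
    rw [h0]
    have hs : Finset.univ.filter (fun z : Fin (2 ^ (n - 1) - 1) → Bool => lidx z = 0)
        = {fun _ => false} := by
      ext z
      simp only [Finset.mem_filter, Finset.mem_univ, true_and, Finset.mem_singleton,
        lidx_eq_zero_iff, funext_iff]
    rw [hs, Finset.sum_singleton]
    simp
  · intro i _
    have hC : ((1 - pp i) * ∏ j ∈ Finset.univ.filter (fun j => i < j), pp j) ≠ 0 := by
      apply mul_ne_zero
      · exact (sub_pos.2 (hpp i).2).ne'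
      · exact Finset.prod_ne_zero_iff.2 fun j _ => (hpp j).1.ne'
    have hfac : ∀ w : (Fin (2 ^ (n - 1) - 1) → Bool) → ℝ,
        (∑ z ∈ Finset.univ.filter (fun z => lidx z = (i : ℕ) + 1),
          w z * ∏ j, if z j then 1 - pp j else pp j)
        = (∑ z ∈ Finset.univ.filter (fun z => lidx z = (i : ℕ) + 1),
            w z * ∏ kk ∈ Finset.univ.filter (fun kk => kk < i),
              (if z kk then 1 - pp kk else pp kk)) *
          ((1 - pp i) * ∏ j ∈ Finset.univ.filter (fun j => i < j), pp j) := by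
      intro w
      rw [Finset.sum_mul]
      apply Finset.sum_congr rfl
      intro z hz
      rw [prod_of_lidx pp i z (by simpa using hz), mul_assoc]
    rw [qEntry_even n hn lam pp _ i.2, qEntry_odd n hn lam pp _ i.2, hfac lam,
      hfac (fun z => 1 - lam z), mul_div_mul_right _ _ hC]
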